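/- Assume conditions (L*), (LI*) and (Adv), and let T < τ₀. If φ = (φ_1,…,φ_n) is a continuous vector function on [T,∞) with φ_k(t) = s_k(t) for t ≥ τ₀ satisfying φ_k(t) = s_k(τ₀) + ∫_t^{τ₀} G_k(τ, φ_1(β_{11}(τ)),…,φ_n(β_{nN}(τ))) dτ for all t ∈ [T,τ₀], then there exist ε > 0 and a continuous vector function φ̃ on [T−ε,∞) that coincides with φ on [T,∞) and satisfies the same integral equation for all t ∈ [T−ε,τ₀]; in other words, no solution of the Cauchy co-problem has a finite (bounded below) maximum existence interval. -/

import Mathlib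

/-!
Equations with advanced arguments are solved leftwards from `T`, one short step at a time. For a
candidate `x` on `[T - ε, T]`, glue `x` to the given solution `φ` on `[T, ∞)` (`glue`) and set
`(F x)(t) = φ(T) + ∫_t^T G(τ, (glue x)(β(τ))) dτ`. By the advance condition,
for `τ ≥ T` only values of `φ` are seen, so the equation on `[T, τ₀]` is unaffected by the choice of
`x`; it also gives `β(τ) ≥ T - ε`, so it does not matter how `x` is extended to the left of `T - ε`
(here, by a constant).

By the Lipschitz condition, two candidates at sup-distance `d` have images at distance at most
`d * n * N * ∫_{T-ε}^T ∑ h_k`. Since `∑ h_k` is integrable near `T`, the factor is at most `1/2` for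
small `ε` (`exists_small_integral`), and Banach's fixed point theorem applies in
`C([T - ε, T], ℝⁿ)`. A fixed point takes the value `φ(T)` at `T`, so gluing it to `φ` gives a
continuous function; additivity of the integral turns the fixed point equation into the original one.
-/

open MeasureTheory Set intervalIntegral

/-- The vector function equal to `x` on `(-∞, T)` and to `φ` on `[T, ∞)`. The value at `T` is
that of `φ`, even for candidates `x` that do not match `φ` there. -/
noncomputable def glue {n : ℕ} (T : ℝ) (φ : Fin n → ℝ → ℝ) (x : ℝ → Fin n → ℝ) :
    Fin n → ℝ → ℝ :=
  fun k t => if T ≤ t then φ k t else x t k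

theorem glue_of_le {n : ℕ} {T : ℝ} (φ : Fin n → ℝ → ℝ) (x : ℝ → Fin n → ℝ) (k : Fin n) {t : ℝ}
    (ht : T ≤ t) : glue T φ x k t = φ k t := if_pos ht

theorem glue_of_lt {n : ℕ} {T : ℝ} (φ : Fin n → ℝ → ℝ) (x : ℝ → Fin n → ℝ) (k : Fin n) {t : ℝ}
    (ht : t < T) : glue T φ x k t = x t k := if_neg (not_le.mpr ht)

theorem measurable_glue {n : ℕ} {T : ℝ} {φ : Fin n → ℝ → ℝ}
    (hφc : ∀ k, ContinuousOn (φ k) (Ici T)) {x : ℝ → Fin n → ℝ} (hx : Continuous x) (k : Fin n) :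
    Measurable (glue T φ x k) := by
  classical
  have := (hφc k).measurable_piecewise
    ((continuous_apply k).comp hx).continuousOn measurableSet_Ici
  convert this using 1
  ext t
  simp [glue, piecewise]

theorem abs_glue_sub_glue_le {n : ℕ} {T d : ℝ} (φ : Fin n → ℝ → ℝ) {x y : ℝ → Fin n → ℝ}
    (hd : 0 ≤ d) (hxy : ∀ t k, |x t k - y t k| ≤ d) (k : Fin n) (t : ℝ) :
    |glue T φ x k t - glue T φ y k t| ≤ d := by
  unfold glue
  split_ifs
  · simpa using hd
  · exact hxy t k

/-- Absolute continuity of the integral at the right end point. -/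
theorem exists_small_integral {H : ℝ → ℝ} {T : ℝ} (hH : IntegrableOn H (Icc (T - 1) T))
    {c : ℝ} (hc : 0 < c) : ∃ ε > 0, ε ≤ 1 ∧ ∫ τ in (T - ε)..T, H τ < c := by
  have hle : T - 1 ≤ T := by linarith
  rw [← uIcc_of_le hle] at hH
  have hcont := continuousOn_primitive_interval_left hH
  rw [uIcc_of_le hle] at hcont
  obtain ⟨δ, hδ, hball⟩ := Metric.continuousOn_iff.mp hcont T ⟨hle, le_rfl⟩ c hc
  refine ⟨min (δ / 2) 1, by positivity, min_le_right _ _, ?_⟩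
  have h1 : min (δ / 2) 1 ≤ δ / 2 := min_le_left _ _
  have h2 : min (δ / 2) 1 ≤ 1 := min_le_right _ _
  have h3 : 0 < min (δ / 2) 1 := by positivity
  have := hball (T - min (δ / 2) 1) ⟨by linarith, by linarith⟩ (by
    rw [Real.dist_eq, abs_lt]; constructor <;> linarith)
  rw [Real.dist_eq, integral_same, sub_zero] at this
  exact (le_abs_self _).trans_lt this

/-- Banach's fixed point theorem for the integral operator on `C([a, T], ℝⁿ)`. The superposition
operator is abstracted to `g`, which sends a candidate `x`, extended to the line by its end values,
to the integrands `g x k`; it need only be Lipschitz with a weight `H` of integral at most `1/2`. -/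
theorem exists_integral_fixedPoint {n : ℕ} {a T : ℝ} (haT : a ≤ T)
    (g : (ℝ → Fin n → ℝ) → Fin n → ℝ → ℝ) (c : Fin n → ℝ) {H : ℝ → ℝ}
    (hH0 : ∀ t ∈ Icc a T, 0 ≤ H t) (hHint : IntegrableOn H (Icc a T))
    (hHsmall : ∫ τ in a..T, H τ ≤ 1 / 2)
    (hg : ∀ x, Continuous x → ∀ k, IntegrableOn (g x k) (Icc a T))
    (hgL : ∀ x y d, 0 ≤ d → (∀ t k, |x t k - y t k| ≤ d) →
      ∀ k, ∀ t ∈ Icc a T, |g x k t - g y k t| ≤ H t * d) :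
    ∃ x : ℝ → Fin n → ℝ, Continuous x ∧
      ∀ t ∈ Icc a T, ∀ k, x t k = c k + ∫ τ in t..T, g x k τ := by
  have hii : ∀ f : ℝ → ℝ, IntegrableOn f (Icc a T) → ∀ t ∈ Icc a T,
      IntervalIntegrable f volume t T := fun f hf t ht =>
    (intervalIntegrable_iff_integrableOn_Icc_of_le ht.2).mpr
      (hf.mono_set (Icc_subset_Icc_left ht.1))
  let E : C(Icc a T, Fin n → ℝ) → ℝ → Fin n → ℝ := fun x => IccExtend haT x
  have hE : ∀ x, Continuous (E x) := fun x => x.continuous.Icc_extend'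
  let F : C(Icc a T, Fin n → ℝ) → C(Icc a T, Fin n → ℝ) := fun x =>
    ⟨fun t k => c k + ∫ τ in (t : ℝ)..T, g (E x) k τ, by
      refine continuous_pi fun k => continuous_const.add ?_
      have := hg (E x) (hE x) k
      rw [← uIcc_of_le haT] at this
      have := continuousOn_primitive_interval_left this
      rw [uIcc_of_le haT] at this
      exact continuousOn_iff_continuous_domRestrict.mp this⟩
  have hF : ContractingWith (1 / 2) F := by
    refine ⟨by norm_num [← NNReal.coe_lt_coe], LipschitzWith.of_dist_le_mul fun x y => ?_⟩
    refine (ContinuousMap.dist_le (by positivity)).mpr fun t => ?_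
    refine (dist_pi_le_iff (by positivity)).mpr fun k => ?_
    have hxy : ∀ t k, |E x t k - E y t k| ≤ dist x y := fun t k =>
      (dist_le_pi_dist (x (projIcc a T haT t)) (y (projIcc a T haT t)) k).trans
        (ContinuousMap.dist_apply_le_dist _)
    have hb : ‖∫ τ in (t : ℝ)..T, (g (E x) k τ - g (E y) k τ)‖
        ≤ ∫ τ in (t : ℝ)..T, H τ * dist x y := by
      refine norm_integral_le_of_norm_le t.2.2 (Filter.Eventually.of_forall fun τ hτ => ?_)
        ((hii H hHint t t.2).mul_const _)
      exact hgL _ _ _ dist_nonneg hxy k τ ⟨t.2.1.trans hτ.1.le, hτ.2⟩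
    have hmono : ∫ τ in (t : ℝ)..T, H τ ≤ ∫ τ in a..T, H τ := by
      refine integral_mono_interval t.2.1 t.2.2 le_rfl ?_ (hii H hHint a ⟨le_rfl, haT⟩)
      exact (ae_restrict_iff' measurableSet_Ioc).mpr
        (Filter.Eventually.of_forall fun τ hτ => hH0 τ ⟨hτ.1.le, hτ.2⟩)
    rw [integral_sub (hii _ (hg _ (hE x) k) t t.2) (hii _ (hg _ (hE y) k) t t.2),
      intervalIntegral.integral_mul_const] at hb
    have hd : dist (F x t k) (F y t k)
        = ‖(∫ τ in (t : ℝ)..T, g (E x) k τ) - ∫ τ in (t : ℝ)..T, g (E y) k τ‖ := by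
      simp [F, dist_eq_norm]
    rw [hd]
    refine hb.trans ?_
    push_cast
    exact mul_le_mul_of_nonneg_right (hmono.trans hHsmall) dist_nonneg
  have : Nonempty C(Icc a T, Fin n → ℝ) := ⟨0⟩
  refine ⟨E (hF.fixedPoint F), hE _, fun t ht k => ?_⟩
  have hfix : F (hF.fixedPoint F) = hF.fixedPoint F := hF.fixedPoint_isFixedPt
  have h1 : E (hF.fixedPoint F) t = hF.fixedPoint F ⟨t, ht⟩ := IccExtend_of_mem haT _ ht
  rw [h1]
  conv_lhs => rw [← hfix]
  rfl

theorem continuation_advanced (τ₀ : ℝ) (n N : ℕ) (hn : 0 < n) (hN : 0 < N)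
    (G : Fin n → ℝ → (Fin n → Fin N → ℝ) → ℝ)
    (h : Fin n → ℝ → ℝ)
    (β : Fin n → Fin N → ℝ → ℝ)
    -- continuity of G k t in u
    (hGcont : ∀ k, ∀ t, t ≤ τ₀ → Continuous (G k t))
    -- (L*): the Lipschitz condition, with h k nonnegative and locally integrable
    (hh0 : ∀ k, ∀ t, t ≤ τ₀ → 0 ≤ h k t)
    (hhloc : ∀ k, LocallyIntegrableOn (h k) (Set.Iic τ₀))
    (hL : ∀ k, ∀ t, t ≤ τ₀ → ∀ u v : Fin n → Fin N → ℝ,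
        |G k t u - G k t v| ≤ h k t * ∑ m : Fin n, ∑ j : Fin N, |u m j - v m j|)
    -- (LI*): local integrability of superpositions
    (hLI : ∀ k, ∀ ψ : Fin n → Fin N → ℝ → ℝ, (∀ m j, Measurable (ψ m j)) →
        LocallyIntegrableOn (fun t => G k t fun m j => ψ m j t) (Set.Iic τ₀))
    -- β measurable and (Adv): the advance condition
    (hβ : ∀ m j, Measurable (β m j))
    (hAdv : ∀ m j, ∀ t, t ≤ τ₀ → t ≤ β m j t)
    -- terminal data, continuous on [τ₀,∞)
    (s : Fin n → ℝ → ℝ) (hs : ∀ k, ContinuousOn (s k) (Set.Ici τ₀))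
    -- a solution on [T,∞)
    (T : ℝ) (hT : T < τ₀)
    (φ : Fin n → ℝ → ℝ)
    (hφc : ∀ k, ContinuousOn (φ k) (Set.Ici T))
    (hφs : ∀ k, ∀ t, τ₀ ≤ t → φ k t = s k t)
    (hφeq : ∀ k, ∀ t ∈ Set.Icc T τ₀,
        φ k t = s k τ₀ + ∫ τ in t..τ₀, G k τ fun m j => φ m (β m j τ)) :
    ∃ ε > 0, ∃ φ' : Fin n → ℝ → ℝ,
      (∀ k, ContinuousOn (φ' k) (Set.Ici (T - ε))) ∧
      (∀ k, ∀ t, T ≤ t → φ' k t = φ k t) ∧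
      (∀ k, ∀ t ∈ Set.Icc (T - ε) τ₀,
        φ' k t = s k τ₀ + ∫ τ in t..τ₀, G k τ fun m j => φ' m (β m j τ)) := by
  let H : ℝ → ℝ := fun t => (∑ k, h k t) * (n * N)
  have hHint : ∀ a, IntegrableOn H (Icc a T) := fun a =>
    (integrable_finsetSum _ fun k _ => (hhloc k).integrableOn_compact_subset
      (fun t ht => ht.2.trans hT.le) isCompact_Icc).mul_const _
  obtain ⟨ε, hε, -, hsmall⟩ := exists_small_integral (hHint (T - 1)) (c := 1 / 2) (by norm_num)
  -- the superposition integrand built from a candidate on the left of `T`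
  let g : (ℝ → Fin n → ℝ) → Fin n → ℝ → ℝ := fun x k τ =>
    G k τ fun m j => glue T φ x m (β m j τ)
  have hgint : ∀ x, Continuous x → ∀ k, ∀ a, IntegrableOn (g x k) (Icc a τ₀) := fun x hx k a =>
    (hLI k (fun m j τ => glue T φ x m (β m j τ))
      fun m j => (measurable_glue hφc hx m).comp (hβ m j)).integrableOn_compact_subset
      (fun t ht => ht.2) isCompact_Icc
  have hgL : ∀ x y d, 0 ≤ d → (∀ t k, |x t k - y t k| ≤ d) →
      ∀ k, ∀ t ∈ Icc (T - ε) T, |g x k t - g y k t| ≤ H t * d := by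
    intro x y d hd hxy k t ht
    have ht0 : t ≤ τ₀ := ht.2.trans hT.le
    have hk : h k t ≤ ∑ k, h k t :=
      Finset.single_le_sum (f := fun k => h k t) (fun i _ => hh0 i t ht0) (Finset.mem_univ k)
    have hsum : ∑ m : Fin n, ∑ j : Fin N,
        |glue T φ x m (β m j t) - glue T φ y m (β m j t)| ≤ n * N * d := by
      calc _ ≤ ∑ _m : Fin n, ∑ _j : Fin N, d := Finset.sum_le_sum fun m _ =>
            Finset.sum_le_sum fun j _ => abs_glue_sub_glue_le φ hd hxy m _
        _ = n * N * d := by simp [mul_assoc]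
    calc |g x k t - g y k t| ≤ h k t * ∑ m : Fin n, ∑ j : Fin N,
          |glue T φ x m (β m j t) - glue T φ y m (β m j t)| := hL k t ht0 _ _
      _ ≤ (∑ k, h k t) * (n * N * d) :=
          mul_le_mul hk hsum (by positivity) ((hh0 k t ht0).trans hk)
      _ = H t * d := by simp only [H]; ring
  obtain ⟨x, hx, hxeq⟩ := exists_integral_fixedPoint (a := T - ε) (T := T) (by linarith) g
    (fun k => φ k T) (H := H)
    (fun t ht => mul_nonneg (Finset.sum_nonneg fun k _ => hh0 k t (ht.2.trans hT.le))
      (by positivity)) (hHint _) hsmall.le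
    (fun x hx k => (hgint x hx k _).mono_set (Icc_subset_Icc_right hT.le)) hgL
  -- the fixed point matches `φ` at `T`, since the integral from `T` to `T` vanishes
  have hglue : ∀ k, ∀ t ≤ T, t ∈ Icc (T - ε) T → glue T φ x k t = x t k := by
    intro k t htT ht
    rcases htT.lt_or_eq with hlt | rfl
    · exact glue_of_lt φ x k hlt
    · rw [glue_of_le φ x k le_rfl, hxeq t ht k, integral_same, add_zero]
  have hright : ∀ k, ∀ t ∈ Icc T τ₀, φ k t = s k τ₀ + ∫ τ in t..τ₀, g x k τ := by
    intro k t ht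
    rw [hφeq k t ht]
    congr 1
    refine integral_congr fun τ hτ => ?_
    rw [uIcc_of_le ht.2] at hτ
    simp only [g]
    congr 1
    funext m j
    exact (glue_of_le φ x m ((ht.1.trans hτ.1).trans (hAdv m j τ hτ.2))).symm
  refine ⟨ε, hε, glue T φ x, fun k => ?_, fun k t ht => glue_of_le φ x k ht, fun k t ht => ?_⟩
  · have hunion : Icc (T - ε) T ∪ Ici T = Ici (T - ε) :=
      Icc_union_Ici_eq_Ici (by linarith)
    rw [← hunion]
    refine ContinuousOn.union_of_isClosed ?_ ?_ isClosed_Icc isClosed_Ici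
    · exact ((continuous_apply k).comp hx).continuousOn.congr fun t ht => hglue k t ht.2 ht
    · exact (hφc k).congr fun t ht => glue_of_le φ x k ht
  · change glue T φ x k t = s k τ₀ + ∫ τ in t..τ₀, g x k τ
    rcases le_total T t with hTt | htT
    · rw [glue_of_le φ x k hTt, hright k t ⟨hTt, ht.2⟩]
    · have hadj : (∫ τ in t..T, g x k τ) + ∫ τ in T..τ₀, g x k τ = ∫ τ in t..τ₀, g x k τ :=
        integral_add_adjacent_intervals
          ((intervalIntegrable_iff_integrableOn_Icc_of_le htT).mpr
            ((hgint x hx k t).mono_set (Icc_subset_Icc_right hT.le)))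
          ((intervalIntegrable_iff_integrableOn_Icc_of_le hT.le).mpr (hgint x hx k T))
      rw [hglue k t htT ⟨ht.1, htT⟩, hxeq t ⟨ht.1, htT⟩ k, hright k T ⟨le_rfl, hT.le⟩, ← hadj]
      ring
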